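/- (Main theorem) Let x* be a local minimizer of (NLP) at which MFCQ holds. Let r be the rank of J(x*) and assume that the rank of J(x) is at most r+1 for every x in some neighborhood of x*. Assume further the smooth-SVD condition: there exist functions x ↦ U(x) ∈ ℝ^{(m+q)×(m+q)}, x ↦ Σ(x) ∈ ℝ^{(m+q)×n}, x ↦ V(x) ∈ ℝ^{n×n}, differentiable in a neighborhood of x*, such that J(x) = U(x)Σ(x)V(x)ᵀ, Σ(x) is diagonal with diagonal entries σ₁(x),…,σ_k(x) where k := min{m+q, n} and σ_i(x) = 0 whenever i exceeds the rank of J(x), and the columns of U(x*) and the columns of V(x*) are non-zero and pairwise orthogonal. Then there exists a Lagrange multiplier (λ,μ) ∈ Λ(x*) such that dᵀ∇²ₓₓL(x*,λ,μ)d ≥ 0 for all d ∈ S(x*) (WSOC holds at x*). -/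

import Mathlib

open scoped BigOperators Pointwise
open Matrix

attribute [local instance] Classical.propDecidable

noncomputable section

/-- The gradient vector of `φ` at `x` (the vector of partial derivatives). -/
def gradVec {n : ℕ} (φ : (Fin n → ℝ) → ℝ) (x : Fin n → ℝ) : Fin n → ℝ :=
  fun k => fderiv ℝ φ x (Pi.single k 1)

/-- The quadratic form `d ↦ dᵀ ∇²φ(x) d` of the Hessian of `φ` at `x`. -/
def hessQ {n : ℕ} (φ : (Fin n → ℝ) → ℝ) (x d : Fin n → ℝ) : ℝ :=
  iteratedFDeriv ℝ 2 φ x ![d, d]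

/-- Feasibility for the problem (NLP). -/
def Feas {n m p : ℕ} (h : Fin m → (Fin n → ℝ) → ℝ) (g : Fin p → (Fin n → ℝ) → ℝ)
    (x : Fin n → ℝ) : Prop :=
  (∀ i, h i x = 0) ∧ ∀ j, g j x ≤ 0

/-- The Lagrangian of (NLP). -/
def Lagr {n m p : ℕ} (f : (Fin n → ℝ) → ℝ) (h : Fin m → (Fin n → ℝ) → ℝ)
    (g : Fin p → (Fin n → ℝ) → ℝ) (lam : Fin m → ℝ) (mu : Fin p → ℝ) (x : Fin n → ℝ) : ℝ :=
  f x + ∑ i, lam i * h i x + ∑ j, mu j * g j x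

/-- `(lam, mu)` is a Lagrange multiplier at `xs`, i.e. `(lam, mu) ∈ Λ(xs)`. -/
def IsLagMult {n m p : ℕ} (f : (Fin n → ℝ) → ℝ) (h : Fin m → (Fin n → ℝ) → ℝ)
    (g : Fin p → (Fin n → ℝ) → ℝ) (xs : Fin n → ℝ) (lam : Fin m → ℝ) (mu : Fin p → ℝ) : Prop :=
  (∀ j, 0 ≤ mu j) ∧ fderiv ℝ (Lagr f h g lam mu) xs = 0 ∧ ∀ j, mu j * g j xs = 0

/-- The Mangasarian-Fromovitz constraint qualification at `xs`. -/
def MFCQ {n m p : ℕ} (h : Fin m → (Fin n → ℝ) → ℝ) (g : Fin p → (Fin n → ℝ) → ℝ)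
    (xs : Fin n → ℝ) : Prop :=
  LinearIndependent ℝ (fun i : Fin m => fderiv ℝ (h i) xs) ∧
  ∃ d : Fin n → ℝ, (∀ i, fderiv ℝ (h i) xs d = 0) ∧
    ∀ j, g j xs = 0 → fderiv ℝ (g j) xs d < 0

/-- Membership in the critical cone `C(xs)`. -/
def critCone {n m p : ℕ} (f : (Fin n → ℝ) → ℝ) (h : Fin m → (Fin n → ℝ) → ℝ)
    (g : Fin p → (Fin n → ℝ) → ℝ) (xs d : Fin n → ℝ) : Prop :=
  fderiv ℝ f xs d = 0 ∧ (∀ i, fderiv ℝ (h i) xs d = 0) ∧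
    ∀ j, g j xs = 0 → fderiv ℝ (g j) xs d ≤ 0

/-- Membership in the critical subspace `S(xs)`. -/
def critSub {n m p : ℕ} (h : Fin m → (Fin n → ℝ) → ℝ) (g : Fin p → (Fin n → ℝ) → ℝ)
    (xs d : Fin n → ℝ) : Prop :=
  (∀ i, fderiv ℝ (h i) xs d = 0) ∧ ∀ j, g j xs = 0 → fderiv ℝ (g j) xs d = 0

/-- The Jacobian matrix `J(x)` of equality and active inequality constraints
(activity taken at the base point `xs`). -/
def Jac {n m p : ℕ} (h : Fin m → (Fin n → ℝ) → ℝ) (g : Fin p → (Fin n → ℝ) → ℝ)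
    (xs x : Fin n → ℝ) : Matrix (Fin m ⊕ {j : Fin p // g j xs = 0}) (Fin n) ℝ :=
  Matrix.of fun i k =>
    Sum.elim (fun i' => fderiv ℝ (h i') x (Pi.single k 1))
      (fun j' => fderiv ℝ (g j'.1) x (Pi.single k 1)) i

/-- A first-order cone: the (direct) sum of a linear subspace and a ray. -/
def IsFirstOrderCone {n : ℕ} (K : Set (Fin n → ℝ)) : Prop :=
  ∃ (W : Submodule ℝ (Fin n → ℝ)) (d0 : Fin n → ℝ),
    K = {x | ∃ w ∈ W, ∃ r : ℝ, 0 ≤ r ∧ x = w + r • d0}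

/-- The rank of a family of vectors: the dimension of its linear span. -/
def famRank {ι : Type*} {n : ℕ} (v : ι → (Fin n → ℝ)) : ℕ :=
  Module.finrank ℝ (Submodule.span ℝ (Set.range v))

/-- The smooth singular value decomposition assumption (Assumption 1 of the paper) for the
Jacobian `J(x)` near `xs`, stated via an enumeration `e` of the rows:
`J(x) = U(x) Σ(x) V(x)ᵀ` on a neighborhood of `xs`, with all entries differentiable there,
`Σ(x)` diagonal with vanishing diagonal entries beyond the rank of `J(x)`, and the columns
of `U(xs)` and of `V(xs)` non-zero and pairwise orthogonal. -/
def SmoothSVD {n m p : ℕ} (h : Fin m → (Fin n → ℝ) → ℝ) (g : Fin p → (Fin n → ℝ) → ℝ)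
    (xs : Fin n → ℝ)
    (e : (Fin m ⊕ {j : Fin p // g j xs = 0}) ≃
      Fin (m + Fintype.card {j : Fin p // g j xs = 0})) : Prop :=
  ∃ O ∈ nhds xs,
    ∃ (U : (Fin n → ℝ) →
        Matrix (Fin (m + Fintype.card {j : Fin p // g j xs = 0}))
          (Fin (m + Fintype.card {j : Fin p // g j xs = 0})) ℝ)
      (S : (Fin n → ℝ) →
        Matrix (Fin (m + Fintype.card {j : Fin p // g j xs = 0})) (Fin n) ℝ)
      (V : (Fin n → ℝ) → Matrix (Fin n) (Fin n) ℝ),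
      (∀ i j', DifferentiableOn ℝ (fun x => U x i j') O) ∧
      (∀ i k, DifferentiableOn ℝ (fun x => S x i k) O) ∧
      (∀ k k', DifferentiableOn ℝ (fun x => V x k k') O) ∧
      (∀ x ∈ O, ∀ i k, Jac h g xs x (e.symm i) k = (U x * S x * (V x)ᵀ) i k) ∧
      (∀ x ∈ O, ∀ (i : Fin (m + Fintype.card {j : Fin p // g j xs = 0})) (k : Fin n),
        (i : ℕ) ≠ (k : ℕ) → S x i k = 0) ∧
      (∀ x ∈ O, ∀ (i : Fin (m + Fintype.card {j : Fin p // g j xs = 0})) (k : Fin n),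
        (i : ℕ) = (k : ℕ) → (Jac h g xs x).rank ≤ (i : ℕ) → S x i k = 0) ∧
      (∀ a, (fun i => U xs i a) ≠ 0) ∧
      (∀ a b, a ≠ b → ∑ i, U xs i a * U xs i b = 0) ∧
      (∀ a, (fun k => V xs k a) ≠ 0) ∧
      (∀ a b, a ≠ b → ∑ k, V xs k a * V xs k b = 0)

/-!
At a local minimizer satisfying MFCQ, the set `Λ` of multipliers is compact and convex, and every
critical direction `d` has its own multiplier making `dᵀ ∇²L d` nonnegative. The smooth
diagonalization makes this choice uniform over `S(xs)`. For `ω` in the left kernel of `J(xs)` and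
`d` in `S(xs)`, the derivative of `ωᵀ J(x) d` sees only derivatives of the diagonal entries of `Σ`
beyond the rank `r`, and since the rank is at most `r + 1` nearby only one such entry varies. As
differences of multipliers lie in this left kernel, the Hessians of the Lagrangian for any two
multipliers differ on `S(xs)` by a multiple of one fixed product `ℓ₁ ℓ₂` of linear forms. Thus they
form a pencil `H + t Q` with `t` in a compact interval, and Yuan's lemma, that is, Helly's theorem
on the line combined with the two-vector case, provides a `t` that works for all `d`.
-/

section YuanLemma

lemma exists_quadratic_roots_of_opposite_signs {a b c : ℝ} (hc : 0 < c) (ha : a < 0) :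
    ∃ s < 0, ∃ t > 0, a * (s * s) + b * s + c = 0 ∧ a * (t * t) + b * t + c = 0 := by
  have hdiscrim : b ^ 2 < discrim a b c := by
    have := mul_neg_of_neg_of_pos ha hc
    rw [discrim]
    linarith
  set δ := √(discrim a b c) with hδ
  have hsq : discrim a b c = δ * δ := (Real.mul_self_sqrt ((sq_nonneg b).trans hdiscrim.le)).symm
  have habs : |b| < δ := by
    rw [hδ]
    exact Real.lt_sqrt_of_sq_lt (by rwa [sq_abs])
  obtain ⟨hlower, hupper⟩ := abs_lt.1 habs
  exact ⟨(-b + δ) / (2 * a), div_neg_of_pos_of_neg (by linarith) (by linarith),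
    (-b - δ) / (2 * a), div_pos_of_neg_of_neg (by linarith) (by linarith),
    (quadratic_eq_zero_iff ha.ne hsq _).2 (Or.inl rfl),
    (quadratic_eq_zero_iff ha.ne hsq _).2 (Or.inr rfl)⟩

lemma quadraticForm_add_smul {R M : Type*} [CommRing R] [AddCommGroup M] [Module R M]
    (Q : QuadraticForm R M) (x y : M) (s : R) :
    Q (x + s • y) = Q y * (s * s) + QuadraticMap.polar Q x y * s + Q x := by
  rw [QuadraticMap.map_add Q, QuadraticMap.map_smul, QuadraticMap.polar_smul_right, smul_eq_mul,
    smul_eq_mul]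
  ring

variable {V : Type*} [AddCommGroup V] [Module ℝ V]

-- The line `d + ℝ e` meets the zero set of `Q` on both sides of `d`; weighting the two resulting
-- inequalities for `H` so that the polar terms cancel gives the claim.
lemma mul_le_mul_of_nonneg_on_zeros {H Q : QuadraticForm ℝ V} (hHQ : ∀ v, Q v = 0 → 0 ≤ H v)
    {d e : V} (hd : 0 < Q d) (he : Q e < 0) : H d * Q e ≤ Q d * H e := by
  obtain ⟨s, hs, t, ht, hQs, hQt⟩ :=
    exists_quadratic_roots_of_opposite_signs (b := QuadraticMap.polar Q d e) hd he
  have hHs := hHQ (d + s • e) (by rw [quadraticForm_add_smul, hQs])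
  have hHt := hHQ (d + t • e) (by rw [quadraticForm_add_smul, hQt])
  rw [quadraticForm_add_smul] at hHs hHt
  have hts : 0 < t - s := by linarith
  have hprod : Q d = s * t * Q e :=
    mul_left_cancel₀ hts.ne' (by linear_combination t * hQs - s * hQt)
  have hweighted : 0 ≤ (t - s) * (H d - s * t * H e) := by
    linarith [mul_nonneg ht.le hHs, mul_nonneg (neg_pos.2 hs).le hHt]
  have hdiff : 0 ≤ H d - s * t * H e := nonneg_of_mul_nonneg_right hweighted hts
  rw [hprod]
  linarith [mul_nonneg hdiff (neg_pos.2 he).le]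

lemma exists_mem_nonneg_add_mul_pair {H Q : QuadraticForm ℝ V} {I : Set ℝ} (hI : I.OrdConnected)
    (hHQ : ∀ v, ∃ t ∈ I, 0 ≤ H v + t * Q v) (d e : V) :
    ∃ t ∈ I, 0 ≤ H d + t * Q d ∧ 0 ≤ H e + t * Q e := by
  wlog hde : Q e ≤ Q d generalizing d e
  · obtain ⟨t, ht, hte, htd⟩ := this e d (le_of_not_ge hde)
    exact ⟨t, ht, htd, hte⟩
  obtain ⟨s, hs, hsd⟩ := hHQ d
  obtain ⟨t, ht, hte⟩ := hHQ e
  rcases le_total t s with hts | hst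
  · rcases le_or_gt 0 (Q e) with he | he
    · exact ⟨s, hs, hsd, hte.trans (by gcongr)⟩
    rcases le_or_gt (Q d) 0 with hd | hd
    · refine ⟨t, ht, ?_, hte⟩
      linarith [mul_nonneg (sub_nonneg.2 hts) (neg_nonneg.2 hd)]
    have hzeros : ∀ v, Q v = 0 → 0 ≤ H v := fun v hv => by
      obtain ⟨τ, -, hτ⟩ := hHQ v
      simpa only [hv, mul_zero, add_zero] using hτ
    have hcross := mul_le_mul_of_nonneg_on_zeros hzeros hd he
    set β := H e / -Q e with hβ
    have hβe : H e + β * Q e = 0 := by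
      rw [hβ]
      field_simp [he.ne]
      ring
    rcases le_or_gt s β with hsβ | hβs
    · refine ⟨s, hs, hsd, ?_⟩
      linarith [mul_nonneg (sub_nonneg.2 hsβ) (neg_pos.2 he).le]
    have htβ : t ≤ β := (le_div_iff₀ (neg_pos.2 he)).2 (by linarith)
    refine ⟨β, hI.out ht hs ⟨htβ, hβs.le⟩, ?_, hβe.ge⟩
    refine nonneg_of_mul_nonneg_left (b := -Q e) ?_ (neg_pos.2 he)
    linear_combination hcross + Q d * hβe
  · rcases le_or_gt 0 (Q d) with hd | hd
    · exact ⟨t, ht, hsd.trans (by gcongr), hte⟩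
    · refine ⟨s, hs, hsd, ?_⟩
      linarith [mul_nonneg (sub_nonneg.2 hst) (neg_nonneg.2 (hde.trans hd.le))]

/-- A form of **Yuan's lemma**. -/
theorem exists_mem_forall_nonneg_add_mul {H Q : QuadraticForm ℝ V} {I : Set ℝ}
    (hIc : IsCompact I) (hI : Convex ℝ I) (hHQ : ∀ v, ∃ t ∈ I, 0 ≤ H v + t * Q v) :
    ∃ t ∈ I, ∀ v, 0 ≤ H v + t * Q v := by
  let F : V → Set ℝ := fun v => I ∩ {t | 0 ≤ H v + t * Q v}
  have hconvex : ∀ v, Convex ℝ (F v) := fun v => hI.inter fun s hs t ht a b ha hb hab => by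
    have := add_nonneg (mul_nonneg ha hs) (mul_nonneg hb ht)
    simp only [Set.mem_ofPred_eq, smul_eq_mul]
    linear_combination this + H v * hab
  have hcompact : ∀ v, IsCompact (F v) := fun v =>
    hIc.inter_right (isClosed_le continuous_const (by fun_prop))
  have hpair : ∀ v w, (F v ∩ F w).Nonempty := fun v w => by
    obtain ⟨t, ht, hv, hw⟩ := exists_mem_nonneg_add_mul_pair hI.ordConnected hHQ v w
    exact ⟨t, ⟨ht, hv⟩, ht, hw⟩
  obtain ⟨t, ht⟩ : (⋂ v, F v).Nonempty := by
    refine Convex.helly_theorem_compact' (𝕜 := ℝ) hconvex hcompact fun s hs => ?_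
    rw [Module.finrank_self] at hs
    obtain ⟨v, w, hvw⟩ : ∃ v w, s ⊆ {v, w} := by
      interval_cases hcard : s.card
      · exact ⟨0, 0, by simp [Finset.card_eq_zero.1 hcard]⟩
      · obtain ⟨v, rfl⟩ := Finset.card_eq_one.1 hcard
        exact ⟨v, v, by simp⟩
      · obtain ⟨v, w, -, rfl⟩ := Finset.card_eq_two.1 hcard
        exact ⟨v, w, subset_rfl⟩
    refine (hpair v w).mono fun t ht => Set.mem_iInter₂.2 fun u hu => ?_
    rcases Finset.mem_insert.1 (hvw hu) with rfl | hu
    · exact ht.1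
    · rw [Finset.mem_singleton.1 hu]
      exact ht.2
  rw [Set.mem_iInter] at ht
  exact ⟨t, (ht 0).1, fun v => (ht v).2⟩

lemma exists_mem_forall_nonneg_of_sub_eq_mul {X : Type*} [AddCommGroup X] [Module ℝ X]
    [TopologicalSpace X] {Λ : Set X} (hΛc : IsCompact Λ) (hΛ : Convex ℝ Λ) {T : X →L[ℝ] ℝ}
    {H : X → QuadraticForm ℝ V} {Q : QuadraticForm ℝ V}
    (hH : ∀ ν ∈ Λ, ∀ ν' ∈ Λ, ∀ v, H ν v - H ν' v = (T ν - T ν') * Q v)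
    (hpos : ∀ v, ∃ ν ∈ Λ, 0 ≤ H ν v) : ∃ ν ∈ Λ, ∀ v, 0 ≤ H ν v := by
  obtain ⟨ν₀, hν₀, -⟩ := hpos 0
  have hpencil : ∀ ν ∈ Λ, ∀ v, (H ν₀ - T ν₀ • Q) v + T ν * Q v = H ν v := fun ν hν v => by
    simp only [_root_.sub_apply, _root_.smul_apply, smul_eq_mul]
    linear_combination -hH ν hν ν₀ hν₀ v
  obtain ⟨-, ⟨ν, hν, rfl⟩, h⟩ := exists_mem_forall_nonneg_add_mul (H := H ν₀ - T ν₀ • Q) (Q := Q)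
    (hΛc.image T.continuous) (hΛ.linear_image T.toLinearMap) fun v => by
      obtain ⟨ν, hν, h⟩ := hpos v
      exact ⟨T ν, ⟨ν, hν, rfl⟩, by rwa [hpencil ν hν]⟩
  exact ⟨ν, hν, fun v => (h v).trans_eq (hpencil ν hν v)⟩

end YuanLemma

section Alternative

lemma exists_apply_eq_of_linearIndependent_dual {𝕜 V ι : Type*} [Field 𝕜] [AddCommGroup V]
    [Module 𝕜 V] [Finite ι] {a : ι → Module.Dual 𝕜 V} (ha : LinearIndependent 𝕜 a) (c : ι → 𝕜) :
    ∃ w, ∀ i, a i w = c i := by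
  have := Fintype.ofFinite ι
  have hsurj : Function.Surjective (LinearMap.pi a) := by
    rw [← LinearMap.range_eq_top]
    by_contra hrange
    obtain ⟨φ, hφ, hmap⟩ :=
      Submodule.exists_dual_map_eq_bot_of_lt_top (lt_top_iff_ne_top.2 hrange) inferInstance
    have hvanish : ∀ v, φ (LinearMap.pi a v) = 0 := fun v => by
      have := Submodule.mem_map_of_mem (f := φ) (LinearMap.mem_range_self (LinearMap.pi a) v)
      rwa [hmap, Submodule.mem_bot] at this
    have hrel : ∑ i, φ (Pi.single i 1) • a i = 0 := LinearMap.ext fun v => by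
      have := hvanish v
      rw [pi_eq_sum_univ' (LinearMap.pi a v)] at this
      simpa [mul_comm] using this
    refine hφ (LinearMap.pi_ext' fun i => LinearMap.ext_ring ?_)
    simpa using Fintype.linearIndependent_iff.1 ha _ hrel i
  obtain ⟨w, hw⟩ := hsurj c
  exact ⟨w, congrFun hw⟩

variable {ι κ V : Type*} [AddCommGroup V] [Module ℝ V]

-- Separate `0` from the open convex cone of strict upper bounds of the vectors `A v + s • b`,
-- `0 < s`.
lemma exists_functional_nonneg_of_not_exists_neg [Finite ι] (A : V →ₗ[ℝ] ι → ℝ) (b : ι → ℝ)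
    (hno : ¬ ∃ v, ∀ j, A v j + b j < 0) :
    ∃ φ : StrongDual ℝ (ι → ℝ), φ ≠ 0 ∧ ∀ s ≥ (0 : ℝ), ∀ v y, A v + s • b ≤ y → 0 ≤ φ y := by
  let C : Set (ι → ℝ) := {y | ∃ s > (0 : ℝ), ∃ v, ∀ j, (A v + s • b) j < y j}
  have hopen : IsOpen C := by
    have : C = ⋃ s > (0 : ℝ), ⋃ v, Set.univ.pi fun j => Set.Ioi ((A v + s • b) j) := by
      ext y
      simp [C]
    rw [this]
    exact isOpen_biUnion fun s _ => isOpen_iUnion fun v =>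
      isOpen_set_pi Set.finite_univ fun j _ => isOpen_Ioi
  have hconvex : Convex ℝ C := by
    rw [convex_iff_forall_pos]
    rintro y ⟨s, hs, v, hv⟩ z ⟨t, ht, w, hw⟩ α β hα hβ -
    refine ⟨α * s + β * t, by positivity, α • v + β • w, fun j => ?_⟩
    have hvj := mul_lt_mul_of_pos_left (hv j) hα
    have hwj := mul_lt_mul_of_pos_left (hw j) hβ
    simp only [map_add, map_smul, Pi.add_apply, Pi.smul_apply, smul_eq_mul] at hvj hwj ⊢
    linarith
  have hzero : (0 : ι → ℝ) ∉ C := by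
    rintro ⟨s, hs, v, hv⟩
    refine hno ⟨s⁻¹ • v, fun j => ?_⟩
    have := mul_neg_of_pos_of_neg (inv_pos.2 hs) (hv j)
    simp only [Pi.add_apply, Pi.smul_apply, smul_eq_mul, map_smul, mul_add] at this ⊢
    rwa [inv_mul_cancel_left₀ hs.ne'] at this
  obtain ⟨φ, hφ⟩ := geometric_hahn_banach_point_open hconvex hopen hzero
  rw [map_zero] at hφ
  refine ⟨φ, fun h0 => ?_, fun s hs v y hy => ?_⟩
  · simpa [h0] using hφ (b + 1) ⟨1, one_pos, 0, by simp⟩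
  · have hlim : Filter.Tendsto (fun ε : ℝ => φ (y + ε • (b + 1))) (nhdsWithin 0 (Set.Ioi 0))
        (nhds (φ y)) :=
      (Continuous.tendsto' (by fun_prop) _ _ (by simp)).mono_left nhdsWithin_le_nhds
    refine ge_of_tendsto hlim ?_
    filter_upwards [self_mem_nhdsWithin] with ε (hε : 0 < ε)
    refine (hφ _ ⟨s + ε, by positivity, v, fun j => ?_⟩).le
    have := hy j
    simp only [Pi.add_apply, Pi.smul_apply, smul_eq_mul, Pi.one_apply] at this ⊢
    linarith

variable [Fintype ι] [Fintype κ]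

lemma exists_nonneg_multipliers_of_not_exists_neg (A : ι → Module.Dual ℝ V) (b : ι → ℝ)
    (hno : ¬ ∃ v, ∀ j, A j v + b j < 0) :
    ∃ μ : ι → ℝ, 0 ≤ μ ∧ μ ≠ 0 ∧ ∑ j, μ j • A j = 0 ∧ 0 ≤ ∑ j, μ j * b j := by
  obtain ⟨φ, hφ0, hφ⟩ := exists_functional_nonneg_of_not_exists_neg (LinearMap.pi A) b hno
  have hsum : ∀ y, φ y = ∑ j, φ (Pi.single j 1) * y j := fun y => by
    conv_lhs => rw [pi_eq_sum_univ' y]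
    simp [mul_comm]
  have hA : ∀ v, 0 ≤ φ (LinearMap.pi A v) := fun v => hφ 0 le_rfl v _ (by simp)
  refine ⟨fun j => φ (Pi.single j 1), fun j => ?_, fun h0 => hφ0 ?_, LinearMap.ext fun v => ?_, ?_⟩
  · exact hφ 0 le_rfl 0 _ (by simp)
  · exact ContinuousLinearMap.ext fun y => (hsum y).trans <|
      Finset.sum_eq_zero fun j _ => mul_eq_zero_of_left (congrFun h0 j) _
  · have : φ (LinearMap.pi A v) = 0 := le_antisymm (by simpa using hA (-v)) (hA v)
    rw [hsum] at this
    simpa using this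
  · rw [← hsum]
    exact hφ 1 zero_le_one 0 _ (by simp)

/-- **Motzkin's theorem of the alternative** for affine systems. -/
theorem exists_multipliers_of_not_exists_neg {a : κ → Module.Dual ℝ V}
    (ha : LinearIndependent ℝ a) (c : κ → ℝ) (A : ι → Module.Dual ℝ V) (b : ι → ℝ)
    (hno : ¬ ∃ v, (∀ i, a i v + c i = 0) ∧ ∀ j, A j v + b j < 0) :
    ∃ (l : κ → ℝ) (μ : ι → ℝ), 0 ≤ μ ∧ μ ≠ 0 ∧ ∑ i, l i • a i + ∑ j, μ j • A j = 0 ∧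
      0 ≤ ∑ i, l i * c i + ∑ j, μ j * b j := by
  obtain ⟨w, hw⟩ := exists_apply_eq_of_linearIndependent_dual ha (-c)
  let K : Submodule ℝ V := ⨅ i, LinearMap.ker (a i)
  obtain ⟨μ, hμ, hμ0, hK, hb⟩ := exists_nonneg_multipliers_of_not_exists_neg
    (fun j => A j ∘ₗ K.subtype) (fun j => A j w + b j) fun ⟨v, hv⟩ => by
      have hvK : ∀ i, a i v = 0 := (Submodule.mem_iInf _).1 v.2
      refine hno ⟨v + w, fun i => by simp [hvK, hw], fun j => ?_⟩
      simpa [add_assoc] using hv j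
  have hspan : -∑ j, μ j • A j ∈ Submodule.span ℝ (Set.range a) :=
    neg_mem <| mem_span_of_iInf_ker_le_ker fun v hv => by
      simpa using LinearMap.congr_fun hK ⟨v, hv⟩
  obtain ⟨l, hl⟩ := (Submodule.mem_span_range_iff_exists_fun ℝ).1 hspan
  refine ⟨l, μ, hμ, hμ0, by rw [hl, neg_add_cancel], ?_⟩
  have hlw := LinearMap.congr_fun hl w
  simp only [LinearMap.coe_sum, Finset.sum_apply, LinearMap.smul_apply, LinearMap.neg_apply, hw,
    Pi.neg_apply, smul_eq_mul, mul_neg, Finset.sum_neg_distrib, neg_inj] at hlw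
  simpa only [hlw, mul_add, Finset.sum_add_distrib] using hb

-- Under the Slater condition the multiplier of the distinguished functional cannot vanish.
theorem exists_normalized_multipliers_of_not_exists_neg {a : κ → Module.Dual ℝ V}
    (ha : LinearIndependent ℝ a) {A : ι → Module.Dual ℝ V}
    (hslater : ∃ v, (∀ i, a i v = 0) ∧ ∀ j, A j v < 0) (a₀ : Module.Dual ℝ V) (b₀ : ℝ)
    (c : κ → ℝ) (b : ι → ℝ)
    (hno : ¬ ∃ v, a₀ v + b₀ < 0 ∧ (∀ i, a i v + c i = 0) ∧ ∀ j, A j v + b j < 0) :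
    ∃ (l : κ → ℝ) (μ : ι → ℝ), 0 ≤ μ ∧ a₀ + ∑ i, l i • a i + ∑ j, μ j • A j = 0 ∧
      0 ≤ b₀ + ∑ i, l i * c i + ∑ j, μ j * b j := by
  obtain ⟨l, μ, hμ, hμ0, hstat, hval⟩ := exists_multipliers_of_not_exists_neg ha c
    (fun j : Option ι => j.elim a₀ A) (fun j => j.elim b₀ b) fun ⟨v, hc, hb⟩ =>
      hno ⟨v, hb none, hc, fun j => hb (some j)⟩
  simp only [Fintype.sum_option, Option.elim] at hstat hval
  have hpos : 0 < μ none := (hμ none).lt_of_ne' fun hzero => by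
    obtain ⟨v, hav, hAv⟩ := hslater
    have hsum : ∑ j, μ (some j) * A j v = 0 := by
      simpa [hzero, hav] using LinearMap.congr_fun hstat v
    refine hμ0 (funext fun o => o.rec hzero fun j => ?_)
    have := (Finset.sum_eq_zero_iff_of_nonpos fun j _ =>
      mul_nonpos_of_nonneg_of_nonpos (hμ (some j)) (hAv j).le).1 hsum j (Finset.mem_univ j)
    exact (mul_eq_zero.1 this).resolve_right (hAv j).ne
  refine ⟨(μ none)⁻¹ • l, fun j => (μ none)⁻¹ * μ (some j),
    fun j => mul_nonneg (inv_pos.2 hpos).le (hμ _), ?_, ?_⟩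
  · have := congrArg ((μ none)⁻¹ • ·) hstat
    simpa [smul_add, Finset.smul_sum, smul_smul, inv_mul_cancel₀ hpos.ne', add_left_comm,
      add_assoc] using this
  · have := mul_nonneg (inv_pos.2 hpos).le hval
    simpa [mul_add, Finset.mul_sum, ← mul_assoc, inv_mul_cancel₀ hpos.ne', add_left_comm,
      add_assoc] using this

end Alternative

section SecondOrderExpansion

open Asymptotics Filter Topology

variable {E F : Type*} [NormedAddCommGroup E] [NormedSpace ℝ E] [NormedAddCommGroup F]
  [NormedSpace ℝ F] {φ : E → F} {x d w : E} {z : ℝ → E}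

/-- The curve `z` has the expansion `z t = x + t • d + (t ^ 2 / 2) • w + o(t ^ 2)` as `t → 0`.
Feasible curves of this kind test second-order conditions; the factor `1 / 2` makes `w` the
acceleration. -/
def HasSecondOrderExpansion (z : ℝ → E) (x d w : E) : Prop :=
  (fun t => z t - (x + t • d + (t ^ 2 / 2) • w)) =o[𝓝 0] fun t => t ^ 2

lemma hasSecondOrderExpansion_parabola (x d w : E) :
    HasSecondOrderExpansion (fun t => x + t • d + (t ^ 2 / 2) • w) x d w := by
  simp only [HasSecondOrderExpansion, sub_self, isLittleO_zero]

namespace HasSecondOrderExpansion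

lemma congr_isLittleO {y : ℝ → E} (hz : HasSecondOrderExpansion z x d w)
    (hyz : (fun t => y t - z t) =o[𝓝 0] fun t => t ^ 2) : HasSecondOrderExpansion y x d w :=
  (hyz.add hz).congr_left fun _ => sub_add_sub_cancel _ _ _

lemma isLittleO_sub_linear (hz : HasSecondOrderExpansion z x d w) :
    (fun t => z t - x - t • d) =o[𝓝 0] fun t => t := by
  have hsq : (fun t : ℝ => t ^ 2) =o[𝓝 0] fun t => t := by
    simpa using isLittleO_pow_pow (𝕜 := ℝ) one_lt_two
  have hquad : (fun t : ℝ => (t ^ 2 / 2) • w) =o[𝓝 0] fun t => t := by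
    refine IsBigO.trans_isLittleO (IsBigO.of_bound (‖w‖) (.of_forall fun t => ?_)) hsq
    rw [norm_smul, norm_div, Real.norm_ofNat, mul_comm]
    gcongr
    linarith [norm_nonneg (t ^ 2)]
  exact ((hz.trans hsq).add hquad).congr_left fun t => by abel

lemma isBigO_sub (hz : HasSecondOrderExpansion z x d w) :
    (fun t => z t - x) =O[𝓝 0] fun t => t := by
  have hd : (fun t : ℝ => t • d) =O[𝓝 0] fun t => t :=
    .of_bound ‖d‖ (.of_forall fun t => by rw [norm_smul, mul_comm])
  exact (hz.isLittleO_sub_linear.isBigO.add hd).congr_left fun t => sub_add_cancel _ _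

lemma tendsto (hz : HasSecondOrderExpansion z x d w) : Tendsto z (𝓝 0) (𝓝 x) :=
  tendsto_sub_nhds_zero_iff.1 <| hz.isBigO_sub.trans_tendsto tendsto_id

end HasSecondOrderExpansion

lemma isLittleO_taylor_two (hφ : ContDiffAt ℝ 2 φ x) :
    (fun y => φ y - (φ x + fderiv ℝ φ x (y - x)
      + (1 / 2 : ℝ) • fderiv ℝ (fderiv ℝ φ) x (y - x) (y - x))) =o[𝓝 x] fun y => ‖y - x‖ ^ 2 := by
  set B := fderiv ℝ (fderiv ℝ φ) x
  have hsymm : ∀ u v, B u v = B v u := hφ.isSymmSndFDerivAt (by simp)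
  have hB : HasFDerivAt (fderiv ℝ φ) B x :=
    ((hφ.fderiv_right (m := 1) (by norm_num)).differentiableAt one_ne_zero).hasFDerivAt
  obtain ⟨ε, hε, hball⟩ := Metric.eventually_nhds_iff_ball.1 (hφ.eventually (by simp))
  have hderiv : ∀ y ∈ Metric.ball x ε, HasFDerivWithinAt
      (fun y => φ y - (fderiv ℝ φ x (y - x) + (1 / 2 : ℝ) • B (y - x) (y - x)))
      (fderiv ℝ φ y - fderiv ℝ φ x - B (y - x)) (Metric.ball x ε) y := fun y hy => by
    have hsub : HasFDerivAt (fun y => y - x) (ContinuousLinearMap.id ℝ E) y :=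
      (hasFDerivAt_id y).sub_const x
    have hφy := ((hball y hy).differentiableAt two_ne_zero).hasFDerivAt
    have hquad := ((B.hasFDerivAt.comp y hsub).clm_apply hsub).const_smul (1 / 2 : ℝ)
    refine ((hφy.sub (((fderiv ℝ φ x).hasFDerivAt.comp y hsub).add hquad)).congr_fderiv
      (ContinuousLinearMap.ext fun v => ?_)).hasFDerivWithinAt
    simp [hsymm v]
    module
  have hsmall : (fun y => fderiv ℝ φ y - fderiv ℝ φ x - B (y - x))
      =o[𝓝[Metric.ball x ε] x] fun y => ‖y - x‖ ^ 1 := by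
    simp only [pow_one]
    exact (hB.isLittleO.mono nhdsWithin_le_nhds).norm_right
  have hmain := (convex_ball x ε).isLittleO_pow_succ (Metric.mem_ball_self hε) hderiv hsmall
  rw [nhdsWithin_eq_nhds.2 (Metric.ball_mem_nhds x hε)] at hmain
  refine hmain.congr_left fun y => ?_
  simp only [sub_self, map_zero, smul_zero, add_zero, sub_zero]
  abel

lemma HasSecondOrderExpansion.comp (hφ : ContDiffAt ℝ 2 φ x)
    (hz : HasSecondOrderExpansion z x d w) :
    HasSecondOrderExpansion (fun t => φ (z t)) (φ x) (fderiv ℝ φ x d)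
      (fderiv ℝ φ x w + fderiv ℝ (fderiv ℝ φ) x d d) := by
  set A := fderiv ℝ φ x
  set B := fderiv ℝ (fderiv ℝ φ) x
  have hremainder : (fun t => φ (z t) - (φ x + A (z t - x) + (1 / 2 : ℝ) • B (z t - x) (z t - x)))
      =o[𝓝 0] fun t => t ^ 2 :=
    ((isLittleO_taylor_two hφ).comp_tendsto hz.tendsto).trans_isBigO (hz.isBigO_sub.norm_left.pow 2)
  have hlinear : (fun t => A (z t - (x + t • d + (t ^ 2 / 2) • w))) =o[𝓝 0] fun t => t ^ 2 :=
    (A.isBigO_comp _ _).trans_isLittleO hz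
  have hsq : (fun t : ℝ => t * t) = fun t => t ^ 2 := funext fun t => (sq t).symm
  have hleft : (fun t => B (z t - x - t • d) (z t - x)) =o[𝓝 0] fun t => t ^ 2 :=
    (B.isBoundedBilinearMap.isBigO_comp).trans_isLittleO
      (hsq ▸ hz.isLittleO_sub_linear.norm_left.mul_isBigO hz.isBigO_sub.norm_left)
  have hlin : (fun t : ℝ => t • d) =O[𝓝 0] fun t => t :=
    .of_bound ‖d‖ (.of_forall fun t => by rw [norm_smul, mul_comm])
  have hright : (fun t : ℝ => B (t • d) (z t - x - t • d)) =o[𝓝 0] fun t => t ^ 2 :=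
    (B.isBoundedBilinearMap.isBigO_comp).trans_isLittleO
      (hsq ▸ hlin.norm_left.mul_isLittleO hz.isLittleO_sub_linear.norm_left)
  refine (hremainder.add (hlinear.add ((hleft.add hright).const_smul_left (1 / 2 : ℝ)))).congr_left
    fun t => ?_
  simp only [map_add, map_sub, map_smul, Pi.smul_apply, _root_.sub_apply,
    _root_.smul_apply]
  module

lemma HasSecondOrderExpansion.eventually_lt {φ : E → ℝ} (hφ : ContDiffAt ℝ 2 φ x)
    (hz : HasSecondOrderExpansion z x d w) (hd : fderiv ℝ φ x d = 0)
    (hw : fderiv ℝ φ x w + fderiv ℝ (fderiv ℝ φ) x d d < 0) :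
    ∀ᶠ t in 𝓝[≠] 0, φ (z t) < φ x := by
  set c := fderiv ℝ φ x w + fderiv ℝ (fderiv ℝ φ) x d d
  have hexp := IsLittleO.def (hz.comp hφ) (c := -c / 4) (by linarith)
  filter_upwards [nhdsWithin_le_nhds hexp, self_mem_nhdsWithin] with t ht (ht0 : t ≠ 0)
  have hneg : t ^ 2 * c < 0 := mul_neg_of_pos_of_neg (by positivity) hw
  rw [hd, smul_zero, add_zero, Real.norm_eq_abs, Real.norm_eq_abs, abs_sq, smul_eq_mul] at ht
  linarith [(abs_le.1 ht).2]

lemma HasSecondOrderExpansion.eventually_lt_of_fderiv_neg {φ : E → ℝ} (hφ : ContDiffAt ℝ 2 φ x)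
    (hz : HasSecondOrderExpansion z x d w) (hd : fderiv ℝ φ x d < 0) :
    ∀ᶠ t in 𝓝[>] 0, φ (z t) < φ x := by
  have hexp := IsLittleO.def (hz.comp hφ).isLittleO_sub_linear (c := -fderiv ℝ φ x d / 2)
    (by linarith)
  filter_upwards [nhdsWithin_le_nhds hexp, self_mem_nhdsWithin] with t ht (ht0 : 0 < t)
  have hneg : t * fderiv ℝ φ x d < 0 := mul_neg_of_pos_of_neg ht0 hd
  rw [Real.norm_eq_abs, Real.norm_eq_abs, abs_of_pos ht0, smul_eq_mul] at ht
  linarith [(abs_le.1 ht).2]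

-- With `Φ` the local inverse of `y ↦ (h y, r y)`, where `r` is a projection onto `ker h'`, take
-- `π y = Φ (h x, r y)`; its distance to `y = Φ (h y, r y)` is controlled since `Φ` is strictly
-- differentiable.
lemma exists_correction_of_surjective [CompleteSpace E] [CompleteSpace F] {h : E → F}
    {h' : E →L[ℝ] F} (hh : HasStrictFDerivAt h h' x) (hsurj : h'.range = ⊤)
    (hker : h'.ker.ClosedComplemented) :
    ∃ π : E → E, (∀ᶠ y in 𝓝 x, h (π y) = h x) ∧
      (fun y => π y - y) =O[𝓝 x] fun y => h y - h x := by
  let D := hh.implicitFunctionDataOfComplemented h h' hsurj hker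
  let r := D.rightFun
  have hΦ : HasStrictFDerivAt D.toOpenPartialHomeomorph.symm _ (h x, r x) :=
    D.hasStrictFDerivAt.to_localInverse
  have hh0 : Tendsto h (𝓝 x) (𝓝 (h x)) := hh.continuousAt
  have hr0 : Tendsto r (𝓝 x) (𝓝 (r x)) := D.hasStrictFDerivAt_rightFun.continuousAt
  refine ⟨fun y => D.implicitFunction (h x) (r y), ?_, ?_⟩
  · exact (tendsto_const_nhds.prodMk_nhds hr0).eventually D.leftFun_implicitFunction
  · have hpair : Tendsto (fun y => ((h x, r y), (h y, r y))) (𝓝 x)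
        (𝓝 ((h x, r x), (h x, r x))) :=
      (tendsto_const_nhds.prodMk_nhds hr0).prodMk_nhds (hh0.prodMk_nhds hr0)
    refine (hΦ.isBigO_sub.comp_tendsto hpair).congr' ?_ .rfl |>.trans (?_)
    · filter_upwards [D.implicitFunction_apply_image] with y hy
      exact congrArg (D.implicitFunction (h x) (r y) - ·) hy
    · refine IsBigO.of_bound 1 (.of_forall fun y => ?_)
      simp [Prod.norm_def, norm_sub_rev]

/-- A second-order form of **Lyusternik's theorem**. -/
theorem exists_hasSecondOrderExpansion_of_surjective [CompleteSpace E] [FiniteDimensional ℝ F]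
    {h : E → F} (hh : ContDiffAt ℝ 2 h x) (hsurj : (fderiv ℝ h x).range = ⊤)
    (hd : fderiv ℝ h x d = 0) (hw : fderiv ℝ h x w + fderiv ℝ (fderiv ℝ h) x d d = 0) :
    ∃ z, HasSecondOrderExpansion z x d w ∧ ∀ᶠ t in 𝓝 0, h (z t) = h x := by
  have := FiniteDimensional.complete ℝ F
  obtain ⟨π, hπ, hdist⟩ := exists_correction_of_surjective (hh.hasStrictFDerivAt two_ne_zero) hsurj
    (ContinuousLinearMap.ker_closedComplemented_of_finiteDimensional_range _)
  have hy := hasSecondOrderExpansion_parabola x d w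
  set y : ℝ → E := fun t => x + t • d + (t ^ 2 / 2) • w
  have hhy : (fun t => h (y t) - h x) =o[𝓝 0] fun t => t ^ 2 := by
    have := hy.comp hh
    simpa only [HasSecondOrderExpansion, hd, hw, smul_zero, add_zero] using this
  exact ⟨fun t => π (y t), hy.congr_isLittleO ((hdist.comp_tendsto hy.tendsto).trans_isLittleO hhy),
    hy.tendsto.eventually hπ⟩

end SecondOrderExpansion

section Lagrangian

variable {n m p : ℕ} {f : (Fin n → ℝ) → ℝ} {h : Fin m → (Fin n → ℝ) → ℝ}
  {g : Fin p → (Fin n → ℝ) → ℝ} {xs d : Fin n → ℝ}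

lemma hessQ_eq_fderiv_fderiv (φ : (Fin n → ℝ) → ℝ) (x d : Fin n → ℝ) :
    hessQ φ x d = fderiv ℝ (fderiv ℝ φ) x d d :=
  iteratedFDeriv_two_apply φ x ![d, d]

/-- The Hessian `d ↦ dᵀ ∇²φ(x) d` as a quadratic form on `ℝⁿ`, to which Yuan's lemma applies. -/
def hessForm (φ : (Fin n → ℝ) → ℝ) (x : Fin n → ℝ) : QuadraticForm ℝ (Fin n → ℝ) :=
  LinearMap.BilinMap.toQuadraticMap
    ((ContinuousLinearMap.coeLM ℝ) ∘ₗ (fderiv ℝ (fderiv ℝ φ) x : (Fin n → ℝ) →ₗ[ℝ] _))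

lemma hessForm_apply (φ : (Fin n → ℝ) → ℝ) (x d : Fin n → ℝ) : hessForm φ x d = hessQ φ x d :=
  (hessQ_eq_fderiv_fderiv φ x d).symm

lemma fderiv_Lagr (hf : DifferentiableAt ℝ f xs) (hh : ∀ i, DifferentiableAt ℝ (h i) xs)
    (hg : ∀ j, DifferentiableAt ℝ (g j) xs) (lam : Fin m → ℝ) (mu : Fin p → ℝ) :
    fderiv ℝ (Lagr f h g lam mu) xs =
      fderiv ℝ f xs + ∑ i, lam i • fderiv ℝ (h i) xs + ∑ j, mu j • fderiv ℝ (g j) xs :=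
  ((hf.hasFDerivAt.add (.fun_sum fun i _ => (hh i).hasFDerivAt.const_mul (lam i))).add
    (.fun_sum fun j _ => (hg j).hasFDerivAt.const_mul (mu j))).fderiv

lemma hessQ_Lagr (hf : ContDiffAt ℝ 2 f xs) (hh : ∀ i, ContDiffAt ℝ 2 (h i) xs)
    (hg : ∀ j, ContDiffAt ℝ 2 (g j) xs) (lam : Fin m → ℝ) (mu : Fin p → ℝ) (d : Fin n → ℝ) :
    hessQ (Lagr f h g lam mu) xs d =
      hessQ f xs d + ∑ i, lam i * hessQ (h i) xs d + ∑ j, mu j * hessQ (g j) xs d := by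
  have hh' : ∀ i, ContDiffAt ℝ 2 (lam i • h i) xs := fun i => contDiffAt_const.smul (hh i)
  have hg' : ∀ j, ContDiffAt ℝ 2 (mu j • g j) xs := fun j => contDiffAt_const.smul (hg j)
  set H := fun x => ∑ i, (lam i • h i) x with hH
  set G := fun x => ∑ j, (mu j • g j) x with hG
  have hHdiff : ContDiffAt ℝ 2 H xs := .sum fun i _ => hh' i
  have hGdiff : ContDiffAt ℝ 2 G xs := .sum fun j _ => hg' j
  have hfH : ContDiffAt ℝ 2 (f + H) xs := hf.add hHdiff
  have hLagr : Lagr f h g lam mu = f + H + G := rfl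
  simp only [hessQ, hLagr]
  rw [iteratedFDeriv_add_apply hfH hGdiff, iteratedFDeriv_add_apply hf hHdiff, hH, hG,
    iteratedFDeriv_fun_sum_apply fun i _ => hh' i, iteratedFDeriv_fun_sum_apply fun j _ => hg' j]
  simp only [iteratedFDeriv_const_smul_apply (hh _), iteratedFDeriv_const_smul_apply (hg _)]
  simp

lemma fderiv_fderiv_pi_apply {E ι : Type*} [NormedAddCommGroup E] [NormedSpace ℝ E] [Finite ι]
    {F : ι → E → ℝ} {x : E} (hF : ∀ i, ContDiffAt ℝ 2 (F i) x) (u v : E) (i : ι) :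
    fderiv ℝ (fderiv ℝ fun y i => F i y) x u v i = fderiv ℝ (fderiv ℝ (F i)) x u v := by
  have := Fintype.ofFinite ι
  have hproj := (ContinuousLinearMap.proj (R := ℝ) (φ := fun _ : ι => ℝ) i).iteratedFDeriv_comp_left
    (contDiffAt_pi.2 hF) (i := 2) le_rfl
  change iteratedFDeriv ℝ 2 (F i) x = _ at hproj
  simpa [iteratedFDeriv_two_apply] using (congrArg (· ![u, v]) hproj).symm

end Lagrangian

section SecondOrderNecessary

open Filter Topology

variable {n m p : ℕ} {f : (Fin n → ℝ) → ℝ} {h : Fin m → (Fin n → ℝ) → ℝ}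
  {g : Fin p → (Fin n → ℝ) → ℝ} {xs d : Fin n → ℝ}

lemma MFCQ.linearIndependent_dual (hmfcq : MFCQ h g xs) :
    LinearIndependent ℝ fun i => (fderiv ℝ (h i) xs : Module.Dual ℝ (Fin n → ℝ)) :=
  hmfcq.1.map' (ContinuousLinearMap.coeLM ℝ)
    (LinearMap.ker_eq_bot.2 ContinuousLinearMap.coe_injective)

lemma MFCQ.range_fderiv_eq_top (hmfcq : MFCQ h g xs) (hh : ∀ i, DifferentiableAt ℝ (h i) xs) :
    (fderiv ℝ (fun x i => h i x) xs).range = ⊤ := by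
  refine LinearMap.range_eq_top.2 fun c => ?_
  obtain ⟨w, hw⟩ := exists_apply_eq_of_linearIndependent_dual hmfcq.linearIndependent_dual c
  refine ⟨w, ?_⟩
  rw [fderiv_pi hh]
  exact funext hw

lemma not_exists_second_order_descent (hf : ContDiffAt ℝ 2 f xs)
    (hh : ∀ i, ContDiffAt ℝ 2 (h i) xs) (hg : ∀ j, ContDiffAt ℝ 2 (g j) xs)
    (hfeas : Feas h g xs) (hmin : IsLocalMinOn f {x | Feas h g x} xs) (hmfcq : MFCQ h g xs)
    (hd : critCone f h g xs d) :
    ¬ ∃ w, fderiv ℝ f xs w + fderiv ℝ (fderiv ℝ f) xs d d < 0 ∧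
      (∀ i, fderiv ℝ (h i) xs w + fderiv ℝ (fderiv ℝ (h i)) xs d d = 0) ∧
      ∀ j, g j xs = 0 → fderiv ℝ (g j) xs d = 0 →
        fderiv ℝ (g j) xs w + fderiv ℝ (fderiv ℝ (g j)) xs d d < 0 := by
  rintro ⟨w, hfw, hhw, hgw⟩
  have hh' : ∀ i, DifferentiableAt ℝ (h i) xs := fun i => (hh i).differentiableAt two_ne_zero
  obtain ⟨z, hz, hhz⟩ := exists_hasSecondOrderExpansion_of_surjective (d := d) (w := w)
    (contDiffAt_pi.2 hh) (hmfcq.range_fderiv_eq_top hh')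
    (by rw [fderiv_pi hh']; exact funext hd.2.1)
    (funext fun i => by
      rw [Pi.add_apply, fderiv_fderiv_pi_apply hh, fderiv_pi hh']
      exact hhw i)
  have hgz : ∀ j, ∀ᶠ t in 𝓝[>] 0, g j (z t) ≤ 0 := by
    intro j
    rcases (hfeas.2 j).lt_or_eq with hj | hj
    · exact nhdsWithin_le_nhds <| (hz.tendsto.eventually
        ((hg j).continuousAt.eventually_lt_const hj)).mono fun _ => le_of_lt
    · suffices ∀ᶠ t in 𝓝[>] 0, g j (z t) < g j xs from this.mono fun t ht => (ht.trans_eq hj).le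
      rcases (hd.2.2 j hj).lt_or_eq with hdj | hdj
      · exact hz.eventually_lt_of_fderiv_neg (hg j) hdj
      · exact nhdsGT_le_nhdsNE 0 (hz.eventually_lt (hg j) hdj (hgw j hj hdj))
  have hfeasz : ∀ᶠ t in 𝓝[>] 0, Feas h g (z t) := by
    filter_upwards [nhdsWithin_le_nhds hhz, eventually_all.2 hgz] with t hht hgt
    exact ⟨fun i => (congrFun hht i).trans (hfeas.1 i), hgt⟩
  have hfz : ∀ᶠ t in 𝓝[>] 0, f xs ≤ f (z t) :=
    (tendsto_nhdsWithin_iff.2 ⟨hz.tendsto.mono_left nhdsWithin_le_nhds, hfeasz⟩).eventually hmin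
  obtain ⟨t, hle, hlt⟩ := (hfz.and (nhdsGT_le_nhdsNE 0 (hz.eventually_lt hf hd.1 hfw))).exists
  exact hle.not_gt hlt

lemma sum_extend_zero_smul {ι κ R M : Type*} [Fintype ι] [Fintype κ] [Semiring R]
    [AddCommMonoid M] [Module R M] {e : ι → κ} (he : e.Injective) (μ : ι → R) (F : κ → M) :
    ∑ k, Function.extend e μ 0 k • F k = ∑ i, μ i • F (e i) :=
  (Fintype.sum_of_injective e he _ _
    (fun k hk => by rw [Function.extend_apply' _ _ _ hk, Pi.zero_apply, zero_smul])
    (fun i => by rw [he.extend_apply])).symm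

theorem exists_isLagMult_hessQ_nonneg (hf : ContDiffAt ℝ 2 f xs)
    (hh : ∀ i, ContDiffAt ℝ 2 (h i) xs) (hg : ∀ j, ContDiffAt ℝ 2 (g j) xs)
    (hfeas : Feas h g xs) (hmin : IsLocalMinOn f {x | Feas h g x} xs) (hmfcq : MFCQ h g xs)
    (hd : critCone f h g xs d) :
    ∃ lam mu, IsLagMult f h g xs lam mu ∧ 0 ≤ hessQ (Lagr f h g lam mu) xs d := by
  have hno := not_exists_second_order_descent hf hh hg hfeas hmin hmfcq hd
  obtain ⟨v, hhv, hgv⟩ := hmfcq.2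
  obtain ⟨lam, μ, hμ, hstat, hcurv⟩ := exists_normalized_multipliers_of_not_exists_neg
    (ι := {j // g j xs = 0 ∧ fderiv ℝ (g j) xs d = 0}) hmfcq.linearIndependent_dual
    (A := fun j => (fderiv ℝ (g j) xs : Module.Dual ℝ (Fin n → ℝ)))
    ⟨v, hhv, fun j => hgv j j.2.1⟩ (fderiv ℝ f xs) (fderiv ℝ (fderiv ℝ f) xs d d)
    (fun i => fderiv ℝ (fderiv ℝ (h i)) xs d d) (fun j => fderiv ℝ (fderiv ℝ (g j)) xs d d)
    fun ⟨w, hfw, hhw, hgw⟩ => hno ⟨w, hfw, hhw, fun j hj hdj => hgw ⟨j, hj, hdj⟩⟩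
  have hinj := Subtype.val_injective (p := fun j => g j xs = 0 ∧ fderiv ℝ (g j) xs d = 0)
  refine ⟨lam, Function.extend Subtype.val μ 0, ⟨?_, ?_, fun j => ?_⟩, ?_⟩
  · exact Function.extend_nonneg hμ le_rfl
  · rw [fderiv_Lagr (hf.differentiableAt two_ne_zero) (fun i => (hh i).differentiableAt two_ne_zero)
      (fun j => (hg j).differentiableAt two_ne_zero), sum_extend_zero_smul hinj]
    ext1 w
    simpa using congr($hstat w)
  · by_cases hj : g j xs = 0
    · rw [hj, mul_zero]
    · have hnot : ¬ ∃ i : {j // g j xs = 0 ∧ fderiv ℝ (g j) xs d = 0}, i = j := by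
        rintro ⟨i, rfl⟩
        exact hj i.2.1
      rw [Function.extend_apply' _ _ _ hnot, Pi.zero_apply, zero_mul]
  · simpa only [hessQ_Lagr hf hh hg, hessQ_eq_fderiv_fderiv, ← smul_eq_mul,
      sum_extend_zero_smul hinj] using hcurv

end SecondOrderNecessary

section MultiplierSet

variable {n m p : ℕ} {f : (Fin n → ℝ) → ℝ} {h : Fin m → (Fin n → ℝ) → ℝ}
  {g : Fin p → (Fin n → ℝ) → ℝ} {xs d : Fin n → ℝ} {lam : Fin m → ℝ} {mu : Fin p → ℝ}

/-- The set `Λ(xs)` of Lagrange multipliers at `xs`, over which the weak second-order condition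
looks for a single element. -/
def multiplierSet (f : (Fin n → ℝ) → ℝ) (h : Fin m → (Fin n → ℝ) → ℝ)
    (g : Fin p → (Fin n → ℝ) → ℝ) (xs : Fin n → ℝ) : Set ((Fin m → ℝ) × (Fin p → ℝ)) :=
  {ν | IsLagMult f h g xs ν.1 ν.2}

namespace IsLagMult

lemma mu_eq_zero (hl : IsLagMult f h g xs lam mu) {j : Fin p} (hj : g j xs ≠ 0) : mu j = 0 :=
  (mul_eq_zero.1 (hl.2.2 j)).resolve_right hj

lemma fderiv_add_sum_eq_zero (hl : IsLagMult f h g xs lam mu) (hf : DifferentiableAt ℝ f xs)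
    (hh : ∀ i, DifferentiableAt ℝ (h i) xs) (hg : ∀ j, DifferentiableAt ℝ (g j) xs)
    (w : Fin n → ℝ) :
    fderiv ℝ f xs w + ∑ i, lam i * fderiv ℝ (h i) xs w + ∑ j, mu j * fderiv ℝ (g j) xs w = 0 := by
  have hstat := hl.2.1
  rw [fderiv_Lagr hf hh hg] at hstat
  simpa using congr($hstat w)

lemma critCone_of_critSub (hl : IsLagMult f h g xs lam mu) (hf : DifferentiableAt ℝ f xs)
    (hh : ∀ i, DifferentiableAt ℝ (h i) xs) (hg : ∀ j, DifferentiableAt ℝ (g j) xs)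
    (hd : critSub h g xs d) : critCone f h g xs d := by
  refine ⟨?_, hd.1, fun j hj => (hd.2 j hj).le⟩
  have hgd : ∀ j, mu j * fderiv ℝ (g j) xs d = 0 := fun j => by
    by_cases hj : g j xs = 0
    · rw [hd.2 j hj, mul_zero]
    · rw [hl.mu_eq_zero hj, zero_mul]
  simpa [hd.1, hgd] using hl.fderiv_add_sum_eq_zero hf hh hg d

lemma mu_le_of_slater (hl : IsLagMult f h g xs lam mu) (hf : DifferentiableAt ℝ f xs)
    (hh : ∀ i, DifferentiableAt ℝ (h i) xs) (hg : ∀ j, DifferentiableAt ℝ (g j) xs)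
    {v : Fin n → ℝ} (hhv : ∀ i, fderiv ℝ (h i) xs v = 0)
    (hgv : ∀ j, g j xs = 0 → fderiv ℝ (g j) xs v < 0) {j : Fin p} (hj : g j xs = 0) :
    mu j ≤ fderiv ℝ f xs v / -fderiv ℝ (g j) xs v := by
  rw [le_div_iff₀ (neg_pos.2 (hgv j hj))]
  have hnonneg : ∀ i, 0 ≤ mu i * -fderiv ℝ (g i) xs v := fun i => by
    by_cases hi : g i xs = 0
    · exact mul_nonneg (hl.1 i) (neg_nonneg.2 (hgv i hi).le)
    · rw [hl.mu_eq_zero hi, zero_mul]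
  calc mu j * -fderiv ℝ (g j) xs v
      ≤ ∑ i, mu i * -fderiv ℝ (g i) xs v :=
        Finset.single_le_sum (fun i _ => hnonneg i) (Finset.mem_univ j)
    _ = fderiv ℝ f xs v := by
        have hstat := hl.fderiv_add_sum_eq_zero hf hh hg v
        simp only [hhv, mul_zero, Finset.sum_const_zero, add_zero] at hstat
        simp only [mul_neg, Finset.sum_neg_distrib]
        linarith

end IsLagMult

lemma isClosed_multiplierSet (hf : DifferentiableAt ℝ f xs)
    (hh : ∀ i, DifferentiableAt ℝ (h i) xs) (hg : ∀ j, DifferentiableAt ℝ (g j) xs) :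
    IsClosed (multiplierSet f h g xs) := by
  simp only [multiplierSet, IsLagMult, fderiv_Lagr hf hh hg, Set.ofPred_and, Set.ofPred_forall]
  exact (isClosed_iInter fun j => isClosed_le (by fun_prop) (by fun_prop)).inter
    ((isClosed_eq (by fun_prop) (by fun_prop)).inter
      (isClosed_iInter fun j => isClosed_eq (by fun_prop) (by fun_prop)))

lemma convex_multiplierSet (hf : DifferentiableAt ℝ f xs)
    (hh : ∀ i, DifferentiableAt ℝ (h i) xs) (hg : ∀ j, DifferentiableAt ℝ (g j) xs) :
    Convex ℝ (multiplierSet f h g xs) := by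
  rintro ⟨l₁, μ₁⟩ (h₁ : IsLagMult ..) ⟨l₂, μ₂⟩ (h₂ : IsLagMult ..) s t hs ht hst
  refine ⟨fun j => add_nonneg (mul_nonneg hs (h₁.1 j)) (mul_nonneg ht (h₂.1 j)), ?_, fun j => ?_⟩
  · have e₁ := h₁.2.1
    have e₂ := h₂.2.1
    rw [fderiv_Lagr hf hh hg] at e₁ e₂ ⊢
    calc _ = s • (fderiv ℝ f xs + ∑ i, l₁ i • fderiv ℝ (h i) xs + ∑ j, μ₁ j • fderiv ℝ (g j) xs)
        + t • (fderiv ℝ f xs + ∑ i, l₂ i • fderiv ℝ (h i) xs + ∑ j, μ₂ j • fderiv ℝ (g j) xs) := by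
          simp only [Prod.smul_mk, Prod.mk_add_mk, Pi.add_apply, Pi.smul_apply, smul_eq_mul,
            add_smul, mul_smul, Finset.sum_add_distrib, Finset.smul_sum, smul_add]
          rw [eq_sub_of_add_eq hst]
          module
      _ = 0 := by rw [e₁, e₂, smul_zero, smul_zero, add_zero]
  · change (s * μ₁ j + t * μ₂ j) * g j xs = 0
    linear_combination s * h₁.2.2 j + t * h₂.2.2 j

theorem MFCQ.isCompact_multiplierSet (hmfcq : MFCQ h g xs) (hf : DifferentiableAt ℝ f xs)
    (hh : ∀ i, DifferentiableAt ℝ (h i) xs) (hg : ∀ j, DifferentiableAt ℝ (g j) xs) :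
    IsCompact (multiplierSet f h g xs) := by
  obtain ⟨v, hhv, hgv⟩ := hmfcq.2
  choose w hw using fun k : Fin m =>
    exists_apply_eq_of_linearIndependent_dual hmfcq.linearIndependent_dual (Pi.single k 1)
  let B : Fin p → ℝ := fun j =>
    if g j xs = 0 then fderiv ℝ f xs v / -fderiv ℝ (g j) xs v else 0
  let ψ : (Fin p → ℝ) → (Fin m → ℝ) × (Fin p → ℝ) := fun μ =>
    (fun k => -(fderiv ℝ f xs (w k) + ∑ j, μ j * fderiv ℝ (g j) xs (w k)), μ)
  have hψ : Continuous ψ := by fun_prop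
  refine (isCompact_Icc (a := 0) (b := B) |>.image hψ).of_isClosed_subset
    (isClosed_multiplierSet hf hh hg) ?_
  rintro ⟨lam, mu⟩ (hl : IsLagMult ..)
  refine ⟨mu, ⟨hl.1, fun j => ?_⟩, Prod.ext (funext fun k => ?_) rfl⟩
  · by_cases hj : g j xs = 0
    · simpa only [B, if_pos hj] using hl.mu_le_of_slater hf hh hg hhv hgv hj
    · simpa only [B, if_neg hj] using (hl.mu_eq_zero hj).le
  · have hstat := hl.fderiv_add_sum_eq_zero hf hh hg (w k)
    have hlam : ∑ i, lam i * fderiv ℝ (h i) xs (w k) = lam k := by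
      simpa [Pi.single_apply] using congr(∑ i, lam i * $(funext (hw k)) i)
    simp only [ψ]
    linarith

end MultiplierSet

section SmoothDiagonalization

open Filter Topology

variable {E : Type*} [NormedAddCommGroup E] [NormedSpace ℝ E] {N n r : ℕ} {x : E}

lemma fderiv_dotProduct_mulVec_of_vecMul_eq_zero {ι κ : Type*} [Fintype ι] [Fintype κ]
    {u : E → ι → ℝ} {S : E → Matrix ι κ ℝ} {v : E → κ → ℝ}
    (hu : ∀ a, DifferentiableAt ℝ (fun y => u y a) x)
    (hS : ∀ a b, DifferentiableAt ℝ (fun y => S y a b) x)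
    (hv : ∀ b, DifferentiableAt ℝ (fun y => v y b) x)
    (huS : u x ᵥ* S x = 0) (hSv : S x *ᵥ v x = 0) (δ : E) :
    fderiv ℝ (fun y => u y ⬝ᵥ S y *ᵥ v y) x δ =
      ∑ a, ∑ b, u x a * (fderiv ℝ (fun y => S y a b) x δ * v x b) := by
  let u' : ι → ℝ := fun a => fderiv ℝ (fun y => u y a) x δ
  let v' : κ → ℝ := fun b => fderiv ℝ (fun y => v y b) x δ
  have hder : HasFDerivAt (fun y => u y ⬝ᵥ S y *ᵥ v y) _ x :=
    .fun_sum (u := Finset.univ) fun a _ => (hu a).hasFDerivAt.mul <|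
      .fun_sum (u := Finset.univ) fun b _ => (hS a b).hasFDerivAt.mul (hv b).hasFDerivAt
  calc fderiv ℝ (fun y => u y ⬝ᵥ S y *ᵥ v y) x δ
      = u x ⬝ᵥ S x *ᵥ v' + ∑ a, ∑ b, u x a * (fderiv ℝ (fun y => S y a b) x δ * v x b)
          + S x *ᵥ v x ⬝ᵥ u' := by
        rw [hder.fderiv]
        simp only [dotProduct, mulVec, u', v', _root_.sum_apply, _root_.add_apply,
          _root_.smul_apply, smul_eq_mul, Finset.mul_sum, mul_add, Finset.sum_add_distrib]
        congr! 5
        ring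
    _ = _ := by
        rw [dotProduct_mulVec, huS, hSv, zero_dotProduct, zero_dotProduct, zero_add, add_zero]

lemma diag_ne_zero_of_le_rank {K : Type*} [Field K] {S : Matrix (Fin N) (Fin n) K} (hr : r ≤ S.rank)
    (hoff : ∀ (i : Fin N) (k : Fin n), (i : ℕ) ≠ k → S i k = 0)
    (hdiag : ∀ (i : Fin N) (k : Fin n), (i : ℕ) = k → r ≤ i → S i k = 0)
    {a : Fin N} {b : Fin n} (hab : (a : ℕ) = b) (har : a < r) : S a b ≠ 0 := by
  intro hzero
  have hsupp : Function.support S.row ⊆ ({i | (i : ℕ) < r ∧ i ≠ a} : Finset (Fin N)) := by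
    refine Function.support_subset_iff'.2 fun i hi => funext fun k => ?_
    simp only [Finset.coe_filter, Finset.mem_univ, true_and, Set.mem_ofPred_eq, not_and_or, not_lt,
      not_not] at hi
    by_cases hik : (i : ℕ) = k
    · rcases hi with hi | rfl
      · exact hdiag i k hik hi
      · rwa [row_apply, Fin.ext (hik.symm.trans hab) (b := b)]
    · exact hoff i k hik
  have hcard : Finset.card {i : Fin N | (i : ℕ) < r ∧ i ≠ a} < r := by
    calc Finset.card {i : Fin N | (i : ℕ) < r ∧ i ≠ a}
        < Finset.card {i : Fin N | (i : ℕ) < r} :=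
          Finset.card_lt_card <| (Finset.ssubset_iff_of_subset
            (Finset.monotone_filter_right _ fun _ _ => And.left)).2 ⟨a, by simp [har], by simp⟩
      _ ≤ r := Fin.card_filter_val_lt.trans_le (min_le_right _ _)
  exact (hr.trans (S.rank_le_card_of_support_subset _ hsupp)).not_gt hcard

lemma isUnit_of_pairwise_orthogonal_columns {ι : Type*} [Fintype ι] [DecidableEq ι]
    {M : Matrix ι ι ℝ} (hne : ∀ a, M.col a ≠ 0)
    (horth : Pairwise fun a b => M.col a ⬝ᵥ M.col b = 0) : IsUnit M := by
  have hgram : Mᵀ * M = diagonal fun a => M.col a ⬝ᵥ M.col a := by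
    ext a b
    obtain rfl | hab := eq_or_ne a b
    · rw [diagonal_apply_eq]; rfl
    · rw [diagonal_apply_ne _ hab]; exact horth hab
  refine isUnit_of_mul_isUnit_right (hgram ▸ isUnit_diagonal.2 (Pi.isUnit_iff.2 fun a => ?_))
  exact isUnit_iff_ne_zero.2 (mt dotProduct_self_eq_zero.1 (hne a))

/-- Near `x` the matrix-valued function `J` factors as `J y = U y * S y * (V y)ᵀ` with factors that
are differentiable at `x`, where `S y` is diagonal with no more than `(J y).rank` nonzero entries,
which come first, and `U x` and `V x` are invertible. This is the part of a smooth singular value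
decomposition that survives when `U` and `V` need not be orthogonal. -/
structure IsSmoothDiagonalization (J : E → Matrix (Fin N) (Fin n) ℝ) (x : E)
    (U : E → Matrix (Fin N) (Fin N) ℝ) (S : E → Matrix (Fin N) (Fin n) ℝ)
    (V : E → Matrix (Fin n) (Fin n) ℝ) : Prop where
  differentiableAt_left : ∀ i a, DifferentiableAt ℝ (fun y => U y i a) x
  differentiableAt_diag : ∀ a b, DifferentiableAt ℝ (fun y => S y a b) x
  differentiableAt_right : ∀ k b, DifferentiableAt ℝ (fun y => V y k b) x
  eventually_eq : ∀ᶠ y in 𝓝 x, J y = U y * S y * (V y)ᵀ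
  eventually_off_diag : ∀ᶠ y in 𝓝 x, ∀ (a : Fin N) (b : Fin n), (a : ℕ) ≠ b → S y a b = 0
  eventually_diag : ∀ᶠ y in 𝓝 x, ∀ (a : Fin N) (b : Fin n),
    (a : ℕ) = b → (J y).rank ≤ a → S y a b = 0
  isUnit_left : IsUnit (U x)
  isUnit_right : IsUnit (V x)

namespace IsSmoothDiagonalization

variable {J : E → Matrix (Fin N) (Fin n) ℝ} {U : E → Matrix (Fin N) (Fin N) ℝ}
  {S : E → Matrix (Fin N) (Fin n) ℝ} {V : E → Matrix (Fin n) (Fin n) ℝ}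
  {ω : Fin N → ℝ} {d : Fin n → ℝ}

lemma vecMul_diag_eq_zero (hJ : IsSmoothDiagonalization J x U S V) (hω : ω ᵥ* J x = 0) :
    (ω ᵥ* U x) ᵥ* S x = 0 := by
  refine mulVec_injective_iff_isUnit.2 hJ.isUnit_right ?_
  rw [← vecMul_transpose, vecMul_vecMul, vecMul_vecMul, ← Matrix.mul_assoc,
    ← hJ.eventually_eq.self_of_nhds, hω, mulVec_zero]

lemma diag_mulVec_eq_zero (hJ : IsSmoothDiagonalization J x U S V) (hd : J x *ᵥ d = 0) :
    S x *ᵥ (d ᵥ* V x) = 0 := by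
  refine mulVec_injective_iff_isUnit.2 hJ.isUnit_left ?_
  rw [← mulVec_transpose, mulVec_mulVec, mulVec_mulVec, ← hJ.eventually_eq.self_of_nhds, hd,
    mulVec_zero]

lemma diag_ne_zero (hJ : IsSmoothDiagonalization J x U S V) {a : Fin N} {b : Fin n}
    (hab : (a : ℕ) = b) (har : a < (J x).rank) : S x a b ≠ 0 := by
  refine diag_ne_zero_of_le_rank ?_ hJ.eventually_off_diag.self_of_nhds
    hJ.eventually_diag.self_of_nhds hab har
  rw [hJ.eventually_eq.self_of_nhds]
  exact (rank_mul_le_left _ _).trans (rank_mul_le_right _ _)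

lemma fderiv_dotProduct_mulVec (hJ : IsSmoothDiagonalization J x U S V) (hω : ω ᵥ* J x = 0)
    (hd : J x *ᵥ d = 0) (δ : E) :
    fderiv ℝ (fun y => ω ⬝ᵥ J y *ᵥ d) x δ =
      ∑ a, ∑ b, (ω ᵥ* U x) a * (fderiv ℝ (fun y => S y a b) x δ * (d ᵥ* V x) b) := by
  have hfactor : (fun y => ω ⬝ᵥ J y *ᵥ d) =ᶠ[𝓝 x]
      fun y => (ω ᵥ* U y) ⬝ᵥ S y *ᵥ (d ᵥ* V y) := by
    filter_upwards [hJ.eventually_eq] with y hy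
    rw [hy, ← mulVec_mulVec, ← mulVec_mulVec, mulVec_transpose, dotProduct_mulVec]
  rw [hfactor.fderiv_eq]
  refine fderiv_dotProduct_mulVec_of_vecMul_eq_zero (fun a => ?_) hJ.differentiableAt_diag
    (fun b => ?_) (hJ.vecMul_diag_eq_zero hω) (hJ.diag_mulVec_eq_zero hd) δ
  · exact .fun_sum (u := Finset.univ) fun i _ => (hJ.differentiableAt_left i a).const_mul (ω i)
  · exact .fun_sum (u := Finset.univ) fun k _ => (hJ.differentiableAt_right k b).const_mul (d k)

lemma fderiv_diag_mul_eq_zero (hJ : IsSmoothDiagonalization J x U S V)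
    (hrank : ∀ᶠ y in 𝓝 x, (J y).rank ≤ (J x).rank + 1) (hd : J x *ᵥ d = 0) {a : Fin N} {b : Fin n}
    (hab : ¬ ((a : ℕ) = (J x).rank ∧ (b : ℕ) = (J x).rank)) (δ : E) :
    fderiv ℝ (fun y => S y a b) x δ * (d ᵥ* V x) b = 0 := by
  have hconst (hS : ∀ᶠ y in 𝓝 x, S y a b = 0) : fderiv ℝ (fun y => S y a b) x δ = 0 := by
    rw [EventuallyEq.fderiv_eq (f := fun _ => 0) hS, fderiv_fun_const]
    rfl
  rcases ne_or_eq (a : ℕ) b with hoff | hdiag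
  · rw [hconst (hJ.eventually_off_diag.mono fun y hy => hy a b hoff), zero_mul]
  rcases lt_or_ge (a : ℕ) (J x).rank with hlt | hge
  · refine mul_eq_zero_of_right _ ((mul_eq_zero.1 ?_).resolve_left (hJ.diag_ne_zero hdiag hlt))
    have hrow : ∑ k, S x a k * (d ᵥ* V x) k = 0 := congrFun (hJ.diag_mulVec_eq_zero hd) a
    rwa [Finset.sum_eq_single b] at hrow
    · exact fun k _ hk => mul_eq_zero_of_left (hJ.eventually_off_diag.self_of_nhds a k fun h =>
        hk (Fin.ext (h.symm.trans hdiag))) _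
    · exact fun hb => absurd (Finset.mem_univ b) hb
  · rw [hconst, zero_mul]
    filter_upwards [hrank, hJ.eventually_diag] with y hy hSy
    exact hSy a b hdiag (by omega)

-- With `r = (J x).rank`, only the `(r, r)` entry of `S` contributes to the derivative.
theorem exists_fderiv_eq_mul (hJ : IsSmoothDiagonalization J x U S V)
    (hrank : ∀ᶠ y in 𝓝 x, (J y).rank ≤ (J x).rank + 1) :
    ∃ (τ : Module.Dual ℝ (Fin N → ℝ)) (ℓ₁ : Module.Dual ℝ E) (ℓ₂ : Module.Dual ℝ (Fin n → ℝ)),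
      ∀ ω d, ω ᵥ* J x = 0 → J x *ᵥ d = 0 → ∀ δ,
        fderiv ℝ (fun y => ω ⬝ᵥ J y *ᵥ d) x δ = τ ω * (ℓ₁ δ * ℓ₂ d) := by
  by_cases hr : (J x).rank < N ∧ (J x).rank < n
  · let a₀ : Fin N := ⟨(J x).rank, hr.1⟩
    let b₀ : Fin n := ⟨(J x).rank, hr.2⟩
    refine ⟨.proj a₀ ∘ₗ (U x).vecMulLinear, fderiv ℝ (fun y => S y a₀ b₀) x,
      .proj b₀ ∘ₗ (V x).vecMulLinear, fun ω d hω hd δ => ?_⟩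
    rw [hJ.fderiv_dotProduct_mulVec hω hd, Finset.sum_eq_single a₀, Finset.sum_eq_single b₀]
    · rfl
    · intro b _ hb
      rw [hJ.fderiv_diag_mul_eq_zero hrank hd (fun h => hb (Fin.ext h.2)), mul_zero]
    · exact fun h => absurd (Finset.mem_univ _) h
    · intro a _ ha
      refine Finset.sum_eq_zero fun b _ => ?_
      rw [hJ.fderiv_diag_mul_eq_zero hrank hd (fun h => ha (Fin.ext h.1)), mul_zero]
    · exact fun h => absurd (Finset.mem_univ _) h
  · refine ⟨0, 0, 0, fun ω d hω hd δ => ?_⟩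
    rw [hJ.fderiv_dotProduct_mulVec hω hd, LinearMap.zero_apply, zero_mul]
    refine Finset.sum_eq_zero fun a _ => Finset.sum_eq_zero fun b _ => ?_
    rw [hJ.fderiv_diag_mul_eq_zero hrank hd (fun h => hr ⟨h.1 ▸ a.2, h.2 ▸ b.2⟩), mul_zero]

end IsSmoothDiagonalization

end SmoothDiagonalization

section WeakSecondOrderCondition

open Filter Topology

variable {n m p N : ℕ} {f : (Fin n → ℝ) → ℝ} {h : Fin m → (Fin n → ℝ) → ℝ}
  {g : Fin p → (Fin n → ℝ) → ℝ} {xs : Fin n → ℝ}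
  {e : (Fin m ⊕ {j : Fin p // g j xs = 0}) ≃ Fin N} {ν ν' : (Fin m → ℝ) × (Fin p → ℝ)}

/-- The critical subspace `S(xs)` as a submodule of `ℝⁿ`, the domain of the forms compared
in the weak second-order condition. -/
def critSubmodule (h : Fin m → (Fin n → ℝ) → ℝ) (g : Fin p → (Fin n → ℝ) → ℝ)
    (xs : Fin n → ℝ) : Submodule ℝ (Fin n → ℝ) where
  carrier := {d | critSub h g xs d}
  zero_mem' := ⟨fun _ => map_zero _, fun _ _ => map_zero _⟩
  add_mem' ha hb := ⟨fun i => by rw [map_add, ha.1, hb.1, add_zero],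
    fun j hj => by rw [map_add, ha.2 j hj, hb.2 j hj, add_zero]⟩
  smul_mem' s _ ha := ⟨fun i => by rw [map_smul, ha.1, smul_zero],
    fun j hj => by rw [map_smul, ha.2 j hj, smul_zero]⟩

/-- The Jacobian `J(x)` with its rows listed in the order given by `e`, so that it can be
diagonalized along the diagonal of `Fin N × Fin n`. -/
abbrev enumJac (h : Fin m → (Fin n → ℝ) → ℝ) (g : Fin p → (Fin n → ℝ) → ℝ) (xs : Fin n → ℝ)
    (e : (Fin m ⊕ {j : Fin p // g j xs = 0}) ≃ Fin N) (x : Fin n → ℝ) :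
    Matrix (Fin N) (Fin n) ℝ :=
  (Jac h g xs x).submatrix e.symm id

lemma rank_enumJac (x : Fin n → ℝ) : (enumJac h g xs e x).rank = (Jac h g xs x).rank :=
  rank_submatrix _ e.symm (Equiv.refl _)

/-- The covector of coefficients which a multiplier `(lam, mu)` gives to the rows of
`enumJac h g xs e`; multipliers of inactive constraints are dropped. -/
def enumMultiplier (e : (Fin m ⊕ {j : Fin p // g j xs = 0}) ≃ Fin N) :
    (Fin m → ℝ) × (Fin p → ℝ) →ₗ[ℝ] Fin N → ℝ where
  toFun ν i := Sum.elim ν.1 (fun j : {j : Fin p // g j xs = 0} => ν.2 j) (e.symm i)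
  map_add' ν ν' := funext fun i => by cases h : e.symm i <;> simp [h]
  map_smul' s ν := funext fun i => by cases h : e.symm i <;> simp [h]

lemma Jac_mulVec (x d : Fin n → ℝ) :
    Jac h g xs x *ᵥ d =
      Sum.elim (fun i => fderiv ℝ (h i) x d)
        (fun j : {j : Fin p // g j xs = 0} => fderiv ℝ (g j) x d) := by
  have hsum (L : (Fin n → ℝ) →L[ℝ] ℝ) : ∑ k, L (Pi.single k 1) * d k = L d := by
    conv_rhs => rw [pi_eq_sum_univ' d]
    simp [mul_comm]
  ext (i | j)
  · exact hsum _
  · exact hsum _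

lemma enumMultiplier_dotProduct_mulVec (hν : ∀ j, g j xs ≠ 0 → ν.2 j = 0) (x d : Fin n → ℝ) :
    enumMultiplier e ν ⬝ᵥ enumJac h g xs e x *ᵥ d =
      ∑ i, ν.1 i * fderiv ℝ (h i) x d + ∑ j, ν.2 j * fderiv ℝ (g j) x d := by
  have hactive : ∑ j : {j // g j xs = 0}, ν.2 j * fderiv ℝ (g j) x d =
      ∑ j, ν.2 j * fderiv ℝ (g j) x d :=
    Fintype.sum_of_injective _ Subtype.val_injective _ _
      (fun j hj => by rw [hν j fun h => hj ⟨⟨j, h⟩, rfl⟩, zero_mul]) fun _ => rfl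
  calc enumMultiplier e ν ⬝ᵥ enumJac h g xs e x *ᵥ d
      = Sum.elim ν.1 (fun j : {j // g j xs = 0} => ν.2 j) ⬝ᵥ Jac h g xs x *ᵥ d :=
        Equiv.sum_comp e.symm fun i =>
          Sum.elim ν.1 (fun j : {j // g j xs = 0} => ν.2 j) i * (Jac h g xs x *ᵥ d) i
    _ = ∑ i, ν.1 i * fderiv ℝ (h i) x d + ∑ j, ν.2 j * fderiv ℝ (g j) x d := by
        rw [Jac_mulVec, sumElim_dotProduct_sumElim, ← hactive]
        rfl

lemma enumMultiplier_sub_vecMul_eq_zero (hν : ν ∈ multiplierSet f h g xs)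
    (hν' : ν' ∈ multiplierSet f h g xs) (hf : DifferentiableAt ℝ f xs)
    (hh : ∀ i, DifferentiableAt ℝ (h i) xs) (hg : ∀ j, DifferentiableAt ℝ (g j) xs) :
    enumMultiplier e (ν - ν') ᵥ* enumJac h g xs e xs = 0 :=
  dotProduct_eq_zero _ fun d => by
    rw [← dotProduct_mulVec, map_sub, sub_dotProduct,
      enumMultiplier_dotProduct_mulVec fun _ => hν.mu_eq_zero,
      enumMultiplier_dotProduct_mulVec fun _ => hν'.mu_eq_zero]
    linarith [hν.fderiv_add_sum_eq_zero hf hh hg d, hν'.fderiv_add_sum_eq_zero hf hh hg d]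

lemma enumJac_mulVec_eq_zero {d : Fin n → ℝ} (hd : critSub h g xs d) :
    enumJac h g xs e xs *ᵥ d = 0 := by
  ext a
  change (Jac h g xs xs *ᵥ d) (e.symm a) = 0
  rw [Jac_mulVec]
  rcases e.symm a with i | j
  · exact hd.1 i
  · exact hd.2 j j.2

lemma fderiv_enumMultiplier_dotProduct_mulVec (hν : ∀ j, g j xs ≠ 0 → ν.2 j = 0)
    (hh : ∀ i, ContDiffAt ℝ 2 (h i) xs) (hg : ∀ j, ContDiffAt ℝ 2 (g j) xs) (d : Fin n → ℝ) :
    fderiv ℝ (fun x => enumMultiplier e ν ⬝ᵥ enumJac h g xs e x *ᵥ d) xs d =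
      ∑ i, ν.1 i * hessQ (h i) xs d + ∑ j, ν.2 j * hessQ (g j) xs d := by
  have hder {φ : (Fin n → ℝ) → ℝ} (hφ : ContDiffAt ℝ 2 φ xs) :
      HasFDerivAt (fun x => fderiv ℝ φ x d) _ xs :=
    ((hφ.fderiv_right (m := 1) le_rfl).differentiableAt one_ne_zero).hasFDerivAt.clm_apply
      (hasFDerivAt_const d xs)
  have hsum : HasFDerivAt
      (fun x => ∑ i, ν.1 i * fderiv ℝ (h i) x d + ∑ j, ν.2 j * fderiv ℝ (g j) x d) _ xs :=
    (HasFDerivAt.fun_sum fun i _ => (hder (hh i)).const_mul (ν.1 i)).add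
      (.fun_sum fun j _ => (hder (hg j)).const_mul (ν.2 j))
  simp only [enumMultiplier_dotProduct_mulVec hν, hsum.fderiv, hessQ_eq_fderiv_fderiv]
  simp

lemma hessQ_Lagr_sub (hν : ν ∈ multiplierSet f h g xs)
    (hν' : ν' ∈ multiplierSet f h g xs) (hf : ContDiffAt ℝ 2 f xs)
    (hh : ∀ i, ContDiffAt ℝ 2 (h i) xs) (hg : ∀ j, ContDiffAt ℝ 2 (g j) xs) (d : Fin n → ℝ) :
    hessQ (Lagr f h g ν.1 ν.2) xs d - hessQ (Lagr f h g ν'.1 ν'.2) xs d =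
      fderiv ℝ (fun x => enumMultiplier e (ν - ν') ⬝ᵥ enumJac h g xs e x *ᵥ d) xs d := by
  have hinactive : ∀ j, g j xs ≠ 0 → (ν - ν').2 j = 0 := fun j hj => by
    rw [Prod.snd_sub, Pi.sub_apply, hν.mu_eq_zero hj, hν'.mu_eq_zero hj, sub_zero]
  rw [fderiv_enumMultiplier_dotProduct_mulVec hinactive hh hg, hessQ_Lagr hf hh hg,
    hessQ_Lagr hf hh hg]
  simp only [Prod.fst_sub, Prod.snd_sub, Pi.sub_apply, sub_mul, Finset.sum_sub_distrib]
  ring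

theorem exists_hessQ_Lagr_sub_eq_mul {U : (Fin n → ℝ) → Matrix (Fin N) (Fin N) ℝ}
    {S : (Fin n → ℝ) → Matrix (Fin N) (Fin n) ℝ} {V : (Fin n → ℝ) → Matrix (Fin n) (Fin n) ℝ}
    (hJ : IsSmoothDiagonalization (enumJac h g xs e) xs U S V)
    (hrank : ∀ᶠ x in 𝓝 xs, (Jac h g xs x).rank ≤ (Jac h g xs xs).rank + 1)
    (hf : ContDiffAt ℝ 2 f xs) (hh : ∀ i, ContDiffAt ℝ 2 (h i) xs)
    (hg : ∀ j, ContDiffAt ℝ 2 (g j) xs) :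
    ∃ (T : Module.Dual ℝ ((Fin m → ℝ) × (Fin p → ℝ))) (ℓ₁ ℓ₂ : Module.Dual ℝ (Fin n → ℝ)),
      ∀ ν ∈ multiplierSet f h g xs, ∀ ν' ∈ multiplierSet f h g xs, ∀ d, critSub h g xs d →
        hessQ (Lagr f h g ν.1 ν.2) xs d - hessQ (Lagr f h g ν'.1 ν'.2) xs d =
          (T ν - T ν') * (ℓ₁ d * ℓ₂ d) := by
  obtain ⟨τ, ℓ₁, ℓ₂, hτ⟩ := hJ.exists_fderiv_eq_mul (by simpa only [rank_enumJac] using hrank)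
  refine ⟨τ ∘ₗ enumMultiplier e, ℓ₁, ℓ₂, fun ν hν ν' hν' d hd => ?_⟩
  have hker := enumMultiplier_sub_vecMul_eq_zero (e := e) hν hν' (hf.differentiableAt two_ne_zero)
    (fun i => (hh i).differentiableAt two_ne_zero) (fun j => (hg j).differentiableAt two_ne_zero)
  rw [hessQ_Lagr_sub (e := e) hν hν' hf hh hg, hτ _ d hker (enumJac_mulVec_eq_zero hd), ← map_sub]
  rfl

lemma SmoothSVD.exists_isSmoothDiagonalization
    {e : (Fin m ⊕ {j : Fin p // g j xs = 0}) ≃ Fin (m + Fintype.card {j : Fin p // g j xs = 0})}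
    (hsvd : SmoothSVD h g xs e) :
    ∃ U S V, IsSmoothDiagonalization (enumJac h g xs e) xs U S V := by
  obtain ⟨O, hO, U, S, V, hU, hS, hV, heq, hoff, hdiag, hU₀, hUorth, hV₀, hVorth⟩ := hsvd
  refine ⟨U, S, V, ?_, ?_, ?_, ?_, ?_, ?_, ?_, ?_⟩
  · exact fun i a => (hU i a).differentiableAt hO
  · exact fun a b => (hS a b).differentiableAt hO
  · exact fun k b => (hV k b).differentiableAt hO
  · filter_upwards [hO] with x hx
    exact Matrix.ext (heq x hx)
  · filter_upwards [hO] with x hx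
    exact hoff x hx
  · filter_upwards [hO] with x hx
    simpa only [rank_enumJac] using hdiag x hx
  · exact isUnit_of_pairwise_orthogonal_columns hU₀ fun a b => hUorth a b
  · exact isUnit_of_pairwise_orthogonal_columns hV₀ fun a b => hVorth a b

theorem stmt10_general (hf : ContDiffAt ℝ 2 f xs) (hh : ∀ i, ContDiffAt ℝ 2 (h i) xs)
    (hg : ∀ j, ContDiffAt ℝ 2 (g j) xs) (hfeas : Feas h g xs)
    (hmin : IsLocalMinOn f {x | Feas h g x} xs) (hmfcq : MFCQ h g xs)
    (hrank : ∀ᶠ x in 𝓝 xs, (Jac h g xs x).rank ≤ (Jac h g xs xs).rank + 1)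
    {U : (Fin n → ℝ) → Matrix (Fin N) (Fin N) ℝ} {S : (Fin n → ℝ) → Matrix (Fin N) (Fin n) ℝ}
    {V : (Fin n → ℝ) → Matrix (Fin n) (Fin n) ℝ}
    (hJ : IsSmoothDiagonalization (enumJac h g xs e) xs U S V) :
    ∃ (lam : Fin m → ℝ) (mu : Fin p → ℝ), IsLagMult f h g xs lam mu ∧
      ∀ d, critSub h g xs d → 0 ≤ hessQ (Lagr f h g lam mu) xs d := by
  have hf' : DifferentiableAt ℝ f xs := hf.differentiableAt two_ne_zero
  have hh' := fun i => (hh i).differentiableAt two_ne_zero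
  have hg' := fun j => (hg j).differentiableAt two_ne_zero
  obtain ⟨T, ℓ₁, ℓ₂, hT⟩ := exists_hessQ_Lagr_sub_eq_mul hJ hrank hf hh hg
  let W := (critSubmodule h g xs).subtype
  let H : (Fin m → ℝ) × (Fin p → ℝ) → QuadraticForm ℝ (critSubmodule h g xs) := fun ν =>
    (hessForm (Lagr f h g ν.1 ν.2) xs).comp W
  have hsecond : ∀ d, ∃ ν ∈ multiplierSet f h g xs, 0 ≤ H ν d := fun d => by
    obtain ⟨lam₀, mu₀, hl₀, -⟩ := exists_isLagMult_hessQ_nonneg hf hh hg hfeas hmin hmfcq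
      (d := 0) ⟨map_zero _, fun _ => map_zero _, fun _ _ => (map_zero _).le⟩
    obtain ⟨lam, mu, hl, hd⟩ := exists_isLagMult_hessQ_nonneg hf hh hg hfeas hmin hmfcq
      (hl₀.critCone_of_critSub hf' hh' hg' d.2)
    exact ⟨(lam, mu), hl, hd.trans_eq (hessForm_apply _ _ _).symm⟩
  obtain ⟨⟨lam, mu⟩, hl, hpos⟩ := exists_mem_forall_nonneg_of_sub_eq_mul
    (hmfcq.isCompact_multiplierSet hf' hh' hg') (convex_multiplierSet hf' hh' hg')
    (T := T.toContinuousLinearMap) (Q := QuadraticMap.linMulLin (ℓ₁ ∘ₗ W) (ℓ₂ ∘ₗ W))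
    (fun ν hν ν' hν' d => by simpa [H, W, hessForm_apply] using hT ν hν ν' hν' d d.2) hsecond
  exact ⟨lam, mu, hl, fun d hd => (hpos ⟨d, hd⟩).trans_eq (hessForm_apply _ _ _)⟩

end WeakSecondOrderCondition

/-- Main theorem: MFCQ, rank of `J(x)` at most `r + 1` near `xs`
(`r` the rank of `J(xs)`), and the smooth SVD assumption imply WSOC at a local minimizer. -/
theorem stmt10 {n m p : ℕ} (f : (Fin n → ℝ) → ℝ) (h : Fin m → (Fin n → ℝ) → ℝ)
    (g : Fin p → (Fin n → ℝ) → ℝ)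
    (hf : ContDiff ℝ 2 f) (hh : ∀ i, ContDiff ℝ 2 (h i)) (hg : ∀ j, ContDiff ℝ 2 (g j))
    (xs : Fin n → ℝ) (hfeas : Feas h g xs)
    (hmin : IsLocalMinOn f {x | Feas h g x} xs)
    (hmfcq : MFCQ h g xs)
    (hrank : ∀ᶠ x in nhds xs, (Jac h g xs x).rank ≤ (Jac h g xs xs).rank + 1)
    (e : (Fin m ⊕ {j : Fin p // g j xs = 0}) ≃
      Fin (m + Fintype.card {j : Fin p // g j xs = 0}))
    (hsvd : SmoothSVD h g xs e) :
    ∃ (lam : Fin m → ℝ) (mu : Fin p → ℝ), IsLagMult f h g xs lam mu ∧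
      ∀ d, critSub h g xs d → 0 ≤ hessQ (Lagr f h g lam mu) xs d := by
  obtain ⟨U, S, V, hJ⟩ := hsvd.exists_isSmoothDiagonalization
  exact stmt10_general hf.contDiffAt (fun i => (hh i).contDiffAt) (fun j => (hg j).contDiffAt)
    hfeas hmin hmfcq hrank hJ
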